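/- Let g be a seven-dimensional complex Lie algebra with a six-dimensional (complex) abelian ideal u and let e₇ ∈ g∖u. Then the following are equivalent: (i) there exists a closed four-form Ψ ∈ Λ⁴g* such that for some basis f¹,…,f⁷ of g*, Ψ = f^{1234}+f^{1256}+f^{3456}−f^{2467}+f^{2357}+f^{1457}+f^{1367} (i.e. g admits a cocalibrated (G₂)_ℂ-structure); (ii) there exists a closed four-form Ω ∈ Λ⁴Ann(span(e₇)) of length l(Ω) ≥ 2. -/

import Mathlib

open Module

section AltMachinery

variable {F : Type*} [Field F] {V : Type*} [AddCommGroup V] [Module F V]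

/-- The wedge `φ₁ ∧ … ∧ φ_m` of `m` covectors, as an alternating `m`-form on `V`:
`(φ₁ ∧ … ∧ φ_m)(v₁,…,v_m) = det (φ_i (v_j))`. -/
noncomputable def wedgeCov (m : ℕ) (φ : Fin m → Module.Dual F V) :
    V [⋀^Fin m]→ₗ[F] F :=
  (Matrix.detRowAlternating : (Fin m → F) [⋀^Fin m]→ₗ[F] F).compLinearMap
    (LinearMap.pi φ)

/-- A decomposable alternating `m`-form: a wedge of `m` covectors. -/
def AltDec (m : ℕ) (X : V [⋀^Fin m]→ₗ[F] F) : Prop :=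
  ∃ φ : Fin m → Module.Dual F V, X = wedgeCov m φ

/-- The `m`-form `X` is a sum of `l` decomposable `m`-forms. -/
def AltLenLE (m l : ℕ) (X : V [⋀^Fin m]→ₗ[F] F) : Prop :=
  ∃ Y : Fin l → (V [⋀^Fin m]→ₗ[F] F), (∀ i, AltDec m (Y i)) ∧ X = ∑ i, Y i

/-- The `m`-form `X` has length `l`: it is a sum of `l` decomposable `m`-forms and of no
smaller number of them. -/
def AltHasLen (m l : ℕ) (X : V [⋀^Fin m]→ₗ[F] F) : Prop :=
  AltLenLE m l X ∧ ∀ j < l, ¬ AltLenLE m j X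

end AltMachinery

section CE

variable {F : Type*} [Field F] {g : Type*} [LieRing g] [LieAlgebra F g]

/-- The Chevalley–Eilenberg differential of a `(k+1)`-form (given as a function on tuples):
`(dρ)(x₀,…,x_{k+1}) = ∑_{i<j} (-1)^{i+j} ρ(⁅x_i,x_j⁆, x₀,…,x̂_i,…,x̂_j,…,x_{k+1})`. -/
noncomputable def ceDiff (k : ℕ) (ρ : (Fin (k + 1) → g) → F) : (Fin (k + 2) → g) → F :=
  fun x => ∑ i : Fin (k + 2), ∑ j : Fin (k + 2),
    if h : (i : ℕ) < (j : ℕ) then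
      (-1 : F) ^ ((i : ℕ) + (j : ℕ)) *
        ρ (Fin.cons ⁅x i, x j⁆ fun l : Fin k =>
            x (j.succAbove ((⟨(i : ℕ),
              Nat.lt_of_lt_of_le h (Nat.lt_succ_iff.mp j.isLt)⟩ : Fin (k + 1)).succAbove l)))
    else 0

end CE

section G2Forms

variable {F : Type*} [Field F] {g : Type*} [AddCommGroup g] [Module F g]

/-- The wedge `f^i ∧ f^j ∧ f^k ∧ f^l` of four covectors from the basis `b` of `g*`. -/
noncomputable def bw (b : Basis (Fin 7) F (Module.Dual F g)) (i j k l : Fin 7) :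
    g [⋀^Fin 4]→ₗ[F] F :=
  wedgeCov 4 ![b i, b j, b k, b l]

/-- The four-form `f^{1234}+f^{1256}+f^{3456}-f^{2467}+f^{2357}+f^{1457}+f^{1367}` (the
Hodge dual of a `G₂`- resp. `(G₂)_ℂ`-structure), written with `0`-based indices. -/
noncomputable def stdG2 (b : Basis (Fin 7) F (Module.Dual F g)) : g [⋀^Fin 4]→ₗ[F] F :=
  bw b 0 1 2 3 + bw b 0 1 4 5 + bw b 2 3 4 5 - bw b 1 3 5 6 +
    bw b 1 2 4 6 + bw b 0 3 4 6 + bw b 0 2 5 6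

/-- The four-form `f^{1234}-f^{1256}-f^{3456}-f^{2467}+f^{2357}+f^{1457}+f^{1367}` (the
Hodge dual of a `G₂*`-structure), written with `0`-based indices. -/
noncomputable def stdG2star (b : Basis (Fin 7) F (Module.Dual F g)) :
    g [⋀^Fin 4]→ₗ[F] F :=
  bw b 0 1 2 3 - bw b 0 1 4 5 - bw b 2 3 4 5 - bw b 1 3 5 6 +
    bw b 1 2 4 6 + bw b 0 3 4 6 + bw b 0 2 5 6

/-- Membership in `Λ⁴W ⊆ Λ⁴g*` for a subspace `W ⊆ g*`: the span of the wedges of four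
covectors from `W`. -/
def mem4Pow (W : Submodule F (Module.Dual F g)) (Ω : g [⋀^Fin 4]→ₗ[F] F) : Prop :=
  Ω ∈ Submodule.span F
    {Y : g [⋀^Fin 4]→ₗ[F] F |
      ∃ φ : Fin 4 → Module.Dual F g, (∀ i, φ i ∈ W) ∧ Y = wedgeCov 4 φ}

end G2Forms

section helpers
variable {U : Type*} [AddCommGroup U] [Module ℂ U]

theorem T_add1 (Θ : U [⋀^Fin 4]→ₗ[ℂ] ℂ) (a a' b c d : U) :
    Θ ![a + a', b, c, d] = Θ ![a, b, c, d] + Θ ![a', b, c, d] :=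
  Θ.map_vecCons_add _ _ _

theorem T_smul1 (Θ : U [⋀^Fin 4]→ₗ[ℂ] ℂ) (r : ℂ) (a b c d : U) :
    Θ ![r • a, b, c, d] = r * Θ ![a, b, c, d] :=
  Θ.map_vecCons_smul _ _ _

theorem T_12 (Θ : U [⋀^Fin 4]→ₗ[ℂ] ℂ) (a b c d : U) :
    Θ ![b, a, c, d] = - Θ ![a, b, c, d] := by
  rw [← Θ.map_swap ![a, b, c, d] (i := 0) (j := 1) (by decide)]
  congr 1; ext i; fin_cases i <;> rfl

theorem T_23 (Θ : U [⋀^Fin 4]→ₗ[ℂ] ℂ) (a b c d : U) :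
    Θ ![a, c, b, d] = - Θ ![a, b, c, d] := by
  rw [← Θ.map_swap ![a, b, c, d] (i := 1) (j := 2) (by decide)]
  congr 1; ext i; fin_cases i <;> rfl

theorem T_34 (Θ : U [⋀^Fin 4]→ₗ[ℂ] ℂ) (a b c d : U) :
    Θ ![a, b, d, c] = - Θ ![a, b, c, d] := by
  rw [← Θ.map_swap ![a, b, c, d] (i := 2) (j := 3) (by decide)]
  congr 1; ext i; fin_cases i <;> rfl

theorem T_e12 (Θ : U [⋀^Fin 4]→ₗ[ℂ] ℂ) (a c d : U) : Θ ![a, a, c, d] = 0 :=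
  Θ.map_eq_zero_of_eq _ (i := 0) (j := 1) rfl (by decide)

theorem T_e13 (Θ : U [⋀^Fin 4]→ₗ[ℂ] ℂ) (a c d : U) : Θ ![a, c, a, d] = 0 :=
  Θ.map_eq_zero_of_eq _ (i := 0) (j := 2) rfl (by decide)

theorem T_e14 (Θ : U [⋀^Fin 4]→ₗ[ℂ] ℂ) (a c d : U) : Θ ![a, c, d, a] = 0 :=
  Θ.map_eq_zero_of_eq _ (i := 0) (j := 3) rfl (by decide)

theorem T_e23 (Θ : U [⋀^Fin 4]→ₗ[ℂ] ℂ) (a c d : U) : Θ ![c, a, a, d] = 0 :=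
  Θ.map_eq_zero_of_eq _ (i := 1) (j := 2) rfl (by decide)

theorem T_e24 (Θ : U [⋀^Fin 4]→ₗ[ℂ] ℂ) (a c d : U) : Θ ![c, a, d, a] = 0 :=
  Θ.map_eq_zero_of_eq _ (i := 1) (j := 3) rfl (by decide)

theorem T_e34 (Θ : U [⋀^Fin 4]→ₗ[ℂ] ℂ) (a c d : U) : Θ ![c, d, a, a] = 0 :=
  Θ.map_eq_zero_of_eq _ (i := 2) (j := 3) rfl (by decide)

theorem T_add2 (Θ : U [⋀^Fin 4]→ₗ[ℂ] ℂ) (a a' b c d : U) :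
    Θ ![b, a + a', c, d] = Θ ![b, a, c, d] + Θ ![b, a', c, d] := by
  rw [T_12, T_add1, T_12 Θ b a, T_12 Θ b a']; ring

theorem T_smul2 (Θ : U [⋀^Fin 4]→ₗ[ℂ] ℂ) (r : ℂ) (a b c d : U) :
    Θ ![b, r • a, c, d] = r * Θ ![b, a, c, d] := by
  rw [T_12, T_smul1, T_12 Θ b a]; ring

theorem T_add3 (Θ : U [⋀^Fin 4]→ₗ[ℂ] ℂ) (a a' b c d : U) :
    Θ ![b, c, a + a', d] = Θ ![b, c, a, d] + Θ ![b, c, a', d] := by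
  rw [T_23, T_add2, T_23 Θ b c a, T_23 Θ b c a']; ring

theorem T_smul3 (Θ : U [⋀^Fin 4]→ₗ[ℂ] ℂ) (r : ℂ) (a b c d : U) :
    Θ ![b, c, r • a, d] = r * Θ ![b, c, a, d] := by
  rw [T_23, T_smul2, T_23 Θ b c a]; ring

theorem T_add4 (Θ : U [⋀^Fin 4]→ₗ[ℂ] ℂ) (a a' b c d : U) :
    Θ ![b, c, d, a + a'] = Θ ![b, c, d, a] + Θ ![b, c, d, a'] := by
  rw [T_34, T_add3, T_34 Θ b c d a, T_34 Θ b c d a']; ring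

theorem T_smul4 (Θ : U [⋀^Fin 4]→ₗ[ℂ] ℂ) (r : ℂ) (a b c d : U) :
    Θ ![b, c, d, r • a] = r * Θ ![b, c, d, a] := by
  rw [T_34, T_smul3, T_34 Θ b c d a]; ring

theorem eta4 {α : Type*} (v : Fin 4 → α) : ![v 0, v 1, v 2, v 3] = v := by
  ext i; fin_cases i <;> rfl

theorem wedge_apply (φ : Fin 4 → Module.Dual ℂ U) (x : Fin 4 → U) :
    wedgeCov 4 φ x = Matrix.det (Matrix.of fun j i => φ i (x j)) := rfl

theorem wedge_comp {W : Type*} [AddCommGroup W] [Module ℂ W] (π : W →ₗ[ℂ] U)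
    (φ : Fin 4 → Module.Dual ℂ U) :
    (wedgeCov 4 φ).compLinearMap π = wedgeCov 4 (fun i => (φ i).comp π) := rfl

/-- forms agreeing on increasing tuples of basis vectors agree -/
theorem ext_incr {n : ℕ} (e : Basis (Fin n) ℂ U) (f h : U [⋀^Fin 4]→ₗ[ℂ] ℂ)
    (H : ∀ a b c d : Fin n, a < b → b < c → c < d →
      f ![e a, e b, e c, e d] = h ![e a, e b, e c, e d]) : f = h := by
  refine Basis.ext_alternating e fun v hv => ?_
  have hm : StrictMono (v ∘ Tuple.sort v) :=
    (Tuple.monotone_sort v).strictMono_of_injective (hv.comp (Tuple.sort v).injective)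
  have key : ∀ F : U [⋀^Fin 4]→ₗ[ℂ] ℂ, F ((fun i => e (v i)) ∘ Tuple.sort v) =
      F ![e ((v ∘ Tuple.sort v) 0), e ((v ∘ Tuple.sort v) 1), e ((v ∘ Tuple.sort v) 2),
        e ((v ∘ Tuple.sort v) 3)] := by
    intro F; congr 1; ext i; fin_cases i <;> rfl
  have h1 := H _ _ _ _ (hm (show (0 : Fin 4) < 1 by decide)) (hm (show (1 : Fin 4) < 2 by decide))
    (hm (show (2 : Fin 4) < 3 by decide))
  rw [← key, ← key, AlternatingMap.map_perm, AlternatingMap.map_perm] at h1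
  exact smul_left_cancel _ h1

end helpers

section closed
variable {g : Type*} [LieRing g] [LieAlgebra ℂ g]

theorem ceDiff_eq {g : Type*} [LieRing g] (ρ : (Fin 4 → g) → ℂ) (x : Fin 5 → g) :
    ceDiff 3 ρ x =
      - ρ ![⁅x 0, x 1⁆, x 2, x 3, x 4] + ρ ![⁅x 0, x 2⁆, x 1, x 3, x 4]
      - ρ ![⁅x 0, x 3⁆, x 1, x 2, x 4] + ρ ![⁅x 0, x 4⁆, x 1, x 2, x 3]
      - ρ ![⁅x 1, x 2⁆, x 0, x 3, x 4] + ρ ![⁅x 1, x 3⁆, x 0, x 2, x 4]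
      - ρ ![⁅x 1, x 4⁆, x 0, x 2, x 3] - ρ ![⁅x 2, x 3⁆, x 0, x 1, x 4]
      + ρ ![⁅x 2, x 4⁆, x 0, x 1, x 3] - ρ ![⁅x 3, x 4⁆, x 0, x 1, x 2] := by
  have key : ∀ (y : g) (a b c : Fin 5) (f : Fin 3 → Fin 5), f = ![a, b, c] →
      ρ (Fin.cons y fun l => x (f l)) = ρ ![y, x a, x b, x c] := by
    intro y a b c f hf; subst hf; congr 1; ext i; fin_cases i <;> rfl
  unfold ceDiff
  have s5 : ∀ f : Fin (3 + 2) → ℂ, ∑ i, f i = f 0 + f 1 + f 2 + f 3 + f 4 := Fin.sum_univ_five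
  simp only [s5]
  simp only [Fin.isValue, Fin.val_zero, Fin.val_one, Fin.val_two, show ((3 : Fin 5) : ℕ) = 3 from rfl,
    show ((4 : Fin 5) : ℕ) = 4 from rfl]
  norm_num
  rw [key _ 2 3 4 _ (by decide), key _ 1 3 4 _ (by decide), key _ 1 2 4 _ (by decide),
    key _ 1 2 3 _ (by decide), key _ 0 3 4 _ (by decide), key _ 0 2 4 _ (by decide),
    key _ 0 2 3 _ (by decide), key _ 0 1 4 _ (by decide), key _ 0 1 3 _ (by decide),
    key _ 0 1 2 _ (by decide)]
  ring

theorem ceDiff_zero_of_vanish (u : LieIdeal ℂ g) (habel : ∀ x ∈ u, ∀ y ∈ u, ⁅x, y⁆ = (0 : g))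
    (e : g) (hdec : ∀ x : g, ∃ t : ℂ, ∃ y ∈ u, x = t • e + y)
    (Φ : g [⋀^Fin 4]→ₗ[ℂ] ℂ)
    (hΦ : ∀ a ∈ u, ∀ b ∈ u, ∀ c ∈ u, ∀ d ∈ u, Φ ![a, b, c, d] = 0) :
    ceDiff 3 ⇑Φ = 0 := by
  ext x
  choose t y hy hx using fun i => hdec (x i)
  have hB : ∀ i, ⁅e, y i⁆ ∈ u := fun i => u.lie_mem (hy i)
  have hbr : ∀ i j, ⁅x i, x j⁆ = t i • ⁅e, y j⁆ + (- t j) • ⁅e, y i⁆ := by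
    intro i j
    rw [hx i, hx j]
    simp only [add_lie, lie_add, smul_lie, lie_smul, lie_self, habel _ (hy i) _ (hy j)]
    rw [← lie_skew e (y i)]
    module
  have hexp : ∀ B ∈ u, ∀ i j k, Φ ![B, x i, x j, x k] =
      t i * Φ ![B, e, y j, y k] - t j * Φ ![B, e, y i, y k] + t k * Φ ![B, e, y i, y j] := by
    intro B hB i j k
    rw [hx i, hx j, hx k]
    simp only [T_add2, T_add3, T_add4, T_smul2, T_smul3, T_smul4, T_e23, T_e24, T_e34,
      hΦ B hB _ (hy i) _ (hy j) _ (hy k)]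
    rw [T_23 Φ B e (y i), T_34 Φ B (y i) e (y j), T_23 Φ B e (y i) (y j)]
    ring
  rw [ceDiff_eq, Pi.zero_apply]
  simp only [hbr, T_add1, T_smul1]
  simp only [hexp _ (hB _)]
  ring

end closed

section explicit
variable {g : Type*} [AddCommGroup g] [Module ℂ g]

/-- explicit 4x4 determinant -/
def d4 (p q r s : Fin 4 → ℂ) : ℂ :=
  p 0 * (q 1 * (r 2 * s 3 - r 3 * s 2) - q 2 * (r 1 * s 3 - r 3 * s 1)
      + q 3 * (r 1 * s 2 - r 2 * s 1))
  - p 1 * (q 0 * (r 2 * s 3 - r 3 * s 2) - q 2 * (r 0 * s 3 - r 3 * s 0)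
      + q 3 * (r 0 * s 2 - r 2 * s 0))
  + p 2 * (q 0 * (r 1 * s 3 - r 3 * s 1) - q 1 * (r 0 * s 3 - r 3 * s 0)
      + q 3 * (r 0 * s 1 - r 1 * s 0))
  - p 3 * (q 0 * (r 1 * s 2 - r 2 * s 1) - q 1 * (r 0 * s 2 - r 2 * s 0)
      + q 2 * (r 0 * s 1 - r 1 * s 0))

theorem wedge_d4 (φ : Fin 4 → Module.Dual ℂ g) (x : Fin 4 → g) :
    wedgeCov 4 φ x = d4 (fun j => φ 0 (x j)) (fun j => φ 1 (x j)) (fun j => φ 2 (x j))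
      (fun j => φ 3 (x j)) := by
  rw [wedge_apply, Matrix.det_succ_row_zero]
  simp [Fin.sum_univ_succ, Matrix.det_fin_three, d4, Fin.succAbove, Matrix.submatrix]
  ring

theorem bw_d4 (b : Basis (Fin 7) ℂ (Module.Dual ℂ g)) (i j k l : Fin 7) (x : Fin 4 → g) :
    bw b i j k l x = d4 (fun t => b i (x t)) (fun t => b j (x t)) (fun t => b k (x t))
      (fun t => b l (x t)) := by
  rw [bw, wedge_d4]; rfl

theorem std_d4 (b : Basis (Fin 7) ℂ (Module.Dual ℂ g)) (x : Fin 4 → g) :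
    stdG2 b x = bw b 0 1 2 3 x + bw b 0 1 4 5 x + bw b 2 3 4 5 x - bw b 1 3 5 6 x +
    bw b 1 2 4 6 x + bw b 0 3 4 6 x + bw b 0 2 5 6 x := rfl

end explicit

section nondegenerate
variable {g : Type*} [AddCommGroup g] [Module ℂ g]

theorem exists_dual [FiniteDimensional ℂ g] {N : ℕ} (b : Basis (Fin N) ℂ (Module.Dual ℂ g)) :
    ∃ v : Basis (Fin N) ℂ g, ∀ i j, b i (v j) = if i = j then 1 else 0 := by
  refine ⟨b.dualBasis.map (Module.evalEquiv ℂ g).symm, fun i j => ?_⟩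
  have : b i ((b.dualBasis.map (Module.evalEquiv ℂ g).symm) j) = b.dualBasis j (b i) := by
    rw [Basis.map_apply, Module.apply_evalEquiv_symm_apply]
  rw [this, Basis.dualBasis_apply_self]

set_option maxHeartbeats 4000000 in
theorem nondeg [FiniteDimensional ℂ g] (b : Basis (Fin 7) ℂ (Module.Dual ℂ g))
    (n : Module.Dual ℂ g) (k : g) (hn : n ≠ 0) (hk : k ≠ 0)
    (E : ∀ x y z w, n x * stdG2 b ![k, y, z, w] - n y * stdG2 b ![k, x, z, w]
      + n z * stdG2 b ![k, x, y, w] - n w * stdG2 b ![k, x, y, z] = 0) : False := by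
  obtain ⟨v, hv⟩ := exists_dual b
  have S : ∀ i j, i ≤ j → n (v i) * b j k + n (v j) * b i k = 0 := by
    have g012 : stdG2 b ![k, v 0, v 1, v 2] = - b 3 k := by
      simp [std_d4, bw_d4, d4, hv]
    have g013 : stdG2 b ![k, v 0, v 1, v 3] = b 2 k := by
      simp [std_d4, bw_d4, d4, hv]
    have g014 : stdG2 b ![k, v 0, v 1, v 4] = - b 5 k := by
      simp [std_d4, bw_d4, d4, hv]
    have g015 : stdG2 b ![k, v 0, v 1, v 5] = b 4 k := by
      simp [std_d4, bw_d4, d4, hv]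
    have g016 : stdG2 b ![k, v 0, v 1, v 6] = 0 := by
      simp [std_d4, bw_d4, d4, hv]
    have g023 : stdG2 b ![k, v 0, v 2, v 3] = - b 1 k := by
      simp [std_d4, bw_d4, d4, hv]
    have g024 : stdG2 b ![k, v 0, v 2, v 4] = 0 := by
      simp [std_d4, bw_d4, d4, hv]
    have g025 : stdG2 b ![k, v 0, v 2, v 5] = - b 6 k := by
      simp [std_d4, bw_d4, d4, hv]
    have g026 : stdG2 b ![k, v 0, v 2, v 6] = b 5 k := by
      simp [std_d4, bw_d4, d4, hv]
    have g034 : stdG2 b ![k, v 0, v 3, v 4] = - b 6 k := by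
      simp [std_d4, bw_d4, d4, hv]
    have g035 : stdG2 b ![k, v 0, v 3, v 5] = 0 := by
      simp [std_d4, bw_d4, d4, hv]
    have g036 : stdG2 b ![k, v 0, v 3, v 6] = b 4 k := by
      simp [std_d4, bw_d4, d4, hv]
    have g045 : stdG2 b ![k, v 0, v 4, v 5] = - b 1 k := by
      simp [std_d4, bw_d4, d4, hv]
    have g046 : stdG2 b ![k, v 0, v 4, v 6] = - b 3 k := by
      simp [std_d4, bw_d4, d4, hv]
    have g056 : stdG2 b ![k, v 0, v 5, v 6] = - b 2 k := by
      simp [std_d4, bw_d4, d4, hv]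
    have g123 : stdG2 b ![k, v 1, v 2, v 3] = b 0 k := by
      simp [std_d4, bw_d4, d4, hv]
    have g124 : stdG2 b ![k, v 1, v 2, v 4] = - b 6 k := by
      simp [std_d4, bw_d4, d4, hv]
    have g125 : stdG2 b ![k, v 1, v 2, v 5] = 0 := by
      simp [std_d4, bw_d4, d4, hv]
    have g126 : stdG2 b ![k, v 1, v 2, v 6] = b 4 k := by
      simp [std_d4, bw_d4, d4, hv]
    have g134 : stdG2 b ![k, v 1, v 3, v 4] = 0 := by
      simp [std_d4, bw_d4, d4, hv]
    have g135 : stdG2 b ![k, v 1, v 3, v 5] = b 6 k := by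
      simp [std_d4, bw_d4, d4, hv]
    have g136 : stdG2 b ![k, v 1, v 3, v 6] = - b 5 k := by
      simp [std_d4, bw_d4, d4, hv]
    have g145 : stdG2 b ![k, v 1, v 4, v 5] = b 0 k := by
      simp [std_d4, bw_d4, d4, hv]
    have g146 : stdG2 b ![k, v 1, v 4, v 6] = - b 2 k := by
      simp [std_d4, bw_d4, d4, hv]
    have g156 : stdG2 b ![k, v 1, v 5, v 6] = b 3 k := by
      simp [std_d4, bw_d4, d4, hv]
    have g234 : stdG2 b ![k, v 2, v 3, v 4] = - b 5 k := by
      simp [std_d4, bw_d4, d4, hv]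
    have g235 : stdG2 b ![k, v 2, v 3, v 5] = b 4 k := by
      simp [std_d4, bw_d4, d4, hv]
    have g236 : stdG2 b ![k, v 2, v 3, v 6] = 0 := by
      simp [std_d4, bw_d4, d4, hv]
    have g245 : stdG2 b ![k, v 2, v 4, v 5] = - b 3 k := by
      simp [std_d4, bw_d4, d4, hv]
    have g246 : stdG2 b ![k, v 2, v 4, v 6] = b 1 k := by
      simp [std_d4, bw_d4, d4, hv]
    have g256 : stdG2 b ![k, v 2, v 5, v 6] = b 0 k := by
      simp [std_d4, bw_d4, d4, hv]
    have g345 : stdG2 b ![k, v 3, v 4, v 5] = b 2 k := by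
      simp [std_d4, bw_d4, d4, hv]
    have g346 : stdG2 b ![k, v 3, v 4, v 6] = b 0 k := by
      simp [std_d4, bw_d4, d4, hv]
    have g356 : stdG2 b ![k, v 3, v 5, v 6] = - b 1 k := by
      simp [std_d4, bw_d4, d4, hv]
    have g456 : stdG2 b ![k, v 4, v 5, v 6] = 0 := by
      simp [std_d4, bw_d4, d4, hv]
    have q0123 := E (v 0) (v 1) (v 2) (v 3)
    have q0124 := E (v 0) (v 1) (v 2) (v 4)
    have q0125 := E (v 0) (v 1) (v 2) (v 5)
    have q0126 := E (v 0) (v 1) (v 2) (v 6)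
    have q0134 := E (v 0) (v 1) (v 3) (v 4)
    have q0135 := E (v 0) (v 1) (v 3) (v 5)
    have q0136 := E (v 0) (v 1) (v 3) (v 6)
    have q0145 := E (v 0) (v 1) (v 4) (v 5)
    have q0146 := E (v 0) (v 1) (v 4) (v 6)
    have q0156 := E (v 0) (v 1) (v 5) (v 6)
    have q0234 := E (v 0) (v 2) (v 3) (v 4)
    have q0235 := E (v 0) (v 2) (v 3) (v 5)
    have q0236 := E (v 0) (v 2) (v 3) (v 6)
    have q0245 := E (v 0) (v 2) (v 4) (v 5)
    have q0246 := E (v 0) (v 2) (v 4) (v 6)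
    have q0256 := E (v 0) (v 2) (v 5) (v 6)
    have q0345 := E (v 0) (v 3) (v 4) (v 5)
    have q0346 := E (v 0) (v 3) (v 4) (v 6)
    have q0356 := E (v 0) (v 3) (v 5) (v 6)
    have q0456 := E (v 0) (v 4) (v 5) (v 6)
    have q1234 := E (v 1) (v 2) (v 3) (v 4)
    have q1235 := E (v 1) (v 2) (v 3) (v 5)
    have q1236 := E (v 1) (v 2) (v 3) (v 6)
    have q1245 := E (v 1) (v 2) (v 4) (v 5)
    have q1246 := E (v 1) (v 2) (v 4) (v 6)
    have q1256 := E (v 1) (v 2) (v 5) (v 6)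
    have q1345 := E (v 1) (v 3) (v 4) (v 5)
    have q1346 := E (v 1) (v 3) (v 4) (v 6)
    have q1356 := E (v 1) (v 3) (v 5) (v 6)
    have q1456 := E (v 1) (v 4) (v 5) (v 6)
    have q2345 := E (v 2) (v 3) (v 4) (v 5)
    have q2346 := E (v 2) (v 3) (v 4) (v 6)
    have q2356 := E (v 2) (v 3) (v 5) (v 6)
    have q2456 := E (v 2) (v 4) (v 5) (v 6)
    have q3456 := E (v 3) (v 4) (v 5) (v 6)
    simp only [g012, g013, g014, g015, g016, g023, g024, g025, g026, g034, g035, g036, g045, g046, g056, g123, g124, g125, g126, g134, g135, g136, g145, g146, g156, g234, g235, g236, g245, g246, g256, g345, g346, g356, g456] at q0123 q0124 q0125 q0126 q0134 q0135 q0136 q0145 q0146 q0156 q0234 q0235 q0236 q0245 q0246 q0256 q0345 q0346 q0356 q0456 q1234 q1235 q1236 q1245 q1246 q1256 q1345 q1346 q1356 q1456 q2345 q2346 q2356 q2456 q3456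
    intro i j hij
    fin_cases i <;> fin_cases j <;> first | (exact absurd hij (by decide)) | skip
    · change n (v 0) * b 0 k + n (v 0) * b 0 k = 0
      linear_combination (1 / 2) * (q0123 + q0145 + q0256 + q0346 - q1246 + q1356 - q2345)
    · change n (v 0) * b 1 k + n (v 1) * b 0 k = 0
      linear_combination (1 / 2) * (q0246 - q0356 + q1256 + q1346)
    · change n (v 0) * b 2 k + n (v 2) * b 0 k = 0
      linear_combination (1 / 2) * (- q0146 + q0345 - q1245 + q2346)
    · change n (v 0) * b 3 k + n (v 3) * b 0 k = 0
      linear_combination (1 / 2) * (q0156 - q0245 - q1345 - q2356)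
    · change n (v 0) * b 4 k + n (v 4) * b 0 k = 0
      linear_combination (1 / 2) * (q0126 + q0235 - q1234 - q2456)
    · change n (v 0) * b 5 k + n (v 5) * b 0 k = 0
      linear_combination (1 / 2) * (- q0136 - q0234 - q1235 + q3456)
    · change n (v 0) * b 6 k + n (v 6) * b 0 k = 0
      linear_combination (1 / 2) * (- q0124 + q0135 - q1236 - q1456)
    · change n (v 1) * b 1 k + n (v 1) * b 1 k = 0
      linear_combination (1 / 2) * (q0123 + q0145 - q0256 - q0346 + q1246 - q1356 - q2345)
    · change n (v 1) * b 2 k + n (v 2) * b 1 k = 0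
      linear_combination (1 / 2) * (q0156 + q0245 + q1345 - q2356)
    · change n (v 1) * b 3 k + n (v 3) * b 1 k = 0
      linear_combination (1 / 2) * (q0146 + q0345 - q1245 - q2346)
    · change n (v 1) * b 4 k + n (v 4) * b 1 k = 0
      linear_combination (1 / 2) * (- q0136 + q0234 + q1235 + q3456)
    · change n (v 1) * b 5 k + n (v 5) * b 1 k = 0
      linear_combination (1 / 2) * (- q0126 + q0235 - q1234 + q2456)
    · change n (v 1) * b 6 k + n (v 6) * b 1 k = 0
      linear_combination (1 / 2) * (q0125 + q0134 + q0236 + q0456)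
    · change n (v 2) * b 2 k + n (v 2) * b 2 k = 0
      linear_combination (1 / 2) * (q0123 - q0145 + q0256 - q0346 + q1246 + q1356 + q2345)
    · change n (v 2) * b 3 k + n (v 3) * b 2 k = 0
      linear_combination (1 / 2) * (q0246 + q0356 - q1256 + q1346)
    · change n (v 2) * b 4 k + n (v 4) * b 2 k = 0
      linear_combination (1 / 2) * (q0125 - q0134 - q0236 + q0456)
    · change n (v 2) * b 5 k + n (v 5) * b 2 k = 0
      linear_combination (1 / 2) * (- q0124 - q0135 + q1236 - q1456)
    · change n (v 2) * b 6 k + n (v 6) * b 2 k = 0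
      linear_combination (1 / 2) * (- q0136 + q0234 - q1235 - q3456)
    · change n (v 3) * b 3 k + n (v 3) * b 3 k = 0
      linear_combination (1 / 2) * (q0123 - q0145 - q0256 + q0346 - q1246 - q1356 + q2345)
    · change n (v 3) * b 4 k + n (v 4) * b 3 k = 0
      linear_combination (1 / 2) * (q0124 + q0135 + q1236 - q1456)
    · change n (v 3) * b 5 k + n (v 5) * b 3 k = 0
      linear_combination (1 / 2) * (q0125 - q0134 + q0236 - q0456)
    · change n (v 3) * b 6 k + n (v 6) * b 3 k = 0
      linear_combination (1 / 2) * (q0126 - q0235 - q1234 + q2456)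
    · change n (v 4) * b 4 k + n (v 4) * b 4 k = 0
      linear_combination (1 / 2) * (- q0123 + q0145 - q0256 + q0346 + q1246 + q1356 + q2345)
    · change n (v 4) * b 5 k + n (v 5) * b 4 k = 0
      linear_combination (1 / 2) * (q0246 + q0356 + q1256 - q1346)
    · change n (v 4) * b 6 k + n (v 6) * b 4 k = 0
      linear_combination (1 / 2) * (- q0156 - q0245 + q1345 - q2356)
    · change n (v 5) * b 5 k + n (v 5) * b 5 k = 0
      linear_combination (1 / 2) * (- q0123 + q0145 + q0256 - q0346 - q1246 - q1356 + q2345)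
    · change n (v 5) * b 6 k + n (v 6) * b 5 k = 0
      linear_combination (1 / 2) * (q0146 + q0345 + q1245 + q2346)
    · change n (v 6) * b 6 k + n (v 6) * b 6 k = 0
      linear_combination (1 / 2) * (- q0123 - q0145 + q0256 + q0346 + q1246 - q1356 - q2345)
  have S' : ∀ i j, n (v i) * b j k + n (v j) * b i k = 0 := by
    intro i j
    rcases le_total i j with h | h
    · exact S i j h
    · rw [add_comm]; exact S j i h
  obtain ⟨i, hi⟩ : ∃ i, b i k ≠ 0 := by
    by_contra! h
    apply hk
    rw [← Module.forall_dual_apply_eq_zero_iff ℂ]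
    intro φ
    rw [← b.sum_repr φ]
    simp only [LinearMap.sum_apply, LinearMap.smul_apply, h, smul_zero, Finset.sum_const_zero]
  have h0 : n (v i) = 0 := by
    have h2 : n (v i) * b i k = 0 := by linear_combination S' i i / 2
    exact (mul_eq_zero.mp h2).resolve_right hi
  apply hn
  refine v.ext fun j => ?_
  have := S' i j
  rw [h0, zero_mul, zero_add] at this
  simpa using (mul_eq_zero.mp this).resolve_right hi

end nondegenerate

section normalform
variable {U : Type*} [AddCommGroup U] [Module ℂ U] [FiniteDimensional ℂ U]

theorem exists_dualB (e : Basis (Fin 6) ℂ U) :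
    ∃ f : Basis (Fin 6) ℂ (Module.Dual ℂ U), ∀ i j, f i (e j) = if j = i then 1 else 0 :=
  ⟨e.dualBasis, fun _ _ => Basis.dualBasis_apply_self _ _ _⟩

set_option maxHeartbeats 1000000 in
theorem final_family (hU : finrank ℂ U = 6) (Θ : U [⋀^Fin 4]→ₗ[ℂ] ℂ) (e : Fin 6 → U)
    (he : LinearIndependent ℂ e) (m p q : ℂ)
    (h0123 : Θ ![e 0, e 1, e 2, e 3] = m)
    (h0145 : Θ ![e 0, e 1, e 4, e 5] = p)
    (h2345 : Θ ![e 2, e 3, e 4, e 5] = q)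
    (ha : ∀ a b c d : Fin 6, a < b → b < c → c < 4 → 4 ≤ d → Θ ![e a, e b, e c, e d] = 0)
    (h0245 : Θ ![e 0, e 2, e 4, e 5] = 0) (h0345 : Θ ![e 0, e 3, e 4, e 5] = 0)
    (h1245 : Θ ![e 1, e 2, e 4, e 5] = 0) (h1345 : Θ ![e 1, e 3, e 4, e 5] = 0) :
    ∃ f : Basis (Fin 6) ℂ (Module.Dual ℂ U),
      Θ = m • wedgeCov 4 ![f 0, f 1, f 2, f 3] + p • wedgeCov 4 ![f 0, f 1, f 4, f 5]
        + q • wedgeCov 4 ![f 2, f 3, f 4, f 5] := by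
  let B := basisOfLinearIndependentOfCardEqFinrank he (by simp [hU])
  have hB : ∀ i, B i = e i := fun i => by simp [B]
  obtain ⟨f, hf⟩ := exists_dualB B
  simp only [hB] at hf
  refine ⟨f, ext_incr B _ _ ?_⟩
  simp only [hB]
  intro a b c d hab hbc hcd
  simp only [AlternatingMap.add_apply, AlternatingMap.smul_apply, wedge_d4]
  by_cases hc : c < 4
  · by_cases hd : 4 ≤ d
    · rw [ha a b c d hab hbc hc hd]
      have h1 : f 0 (e d) = 0 ∧ f 1 (e d) = 0 ∧ f 2 (e d) = 0 ∧ f 3 (e d) = 0 := by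
        simp only [hf]; simp; omega
      have h2 : ∀ x : Fin 6, x < 4 → f 4 (e x) = 0 ∧ f 5 (e x) = 0 := by
        intro x hx; simp only [hf]; revert hx; revert x; simp; decide
      have h2a := h2 a (hab.trans (hbc.trans hc))
      have h2b := h2 b (hbc.trans hc)
      have h2c := h2 c hc
      simp [d4, h1, h2a, h2b, h2c]
    · have : a = 0 ∧ b = 1 ∧ c = 2 ∧ d = 3 := by omega
      obtain ⟨rfl, rfl, rfl, rfl⟩ := this
      rw [h0123]; simp [d4, hf]
  · have : c = 4 ∧ d = 5 := by omega
    obtain ⟨rfl, rfl⟩ := this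
    have : (a = 0 ∧ b = 1) ∨ (a = 0 ∧ b = 2) ∨ (a = 0 ∧ b = 3) ∨ (a = 1 ∧ b = 2) ∨
      (a = 1 ∧ b = 3) ∨ (a = 2 ∧ b = 3) := by omega
    rcases this with ⟨rfl, rfl⟩ | ⟨rfl, rfl⟩ | ⟨rfl, rfl⟩ | ⟨rfl, rfl⟩ | ⟨rfl, rfl⟩ | ⟨rfl, rfl⟩
    · rw [h0145]; simp [d4, hf]
    · rw [h0245]; simp [d4, hf]
    · rw [h0345]; simp [d4, hf]
    · rw [h1245]; simp [d4, hf]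
    · rw [h1345]; simp [d4, hf]
    · rw [h2345]; simp [d4, hf]

/-- independence from the first four vectors being detected and the last two independent mod them -/
theorem indep6 (Θ : U [⋀^Fin 4]→ₗ[ℂ] ℂ) (v0 v1 v2 v3 w w' : U)
    (hm : Θ ![v0, v1, v2, v3] ≠ 0) (hw : LinearIndependent ℂ ![w, w'])
    (h : ∀ y, (y = w ∨ y = w') → Θ ![v0, v1, v2, y] = 0 ∧ Θ ![v0, v1, v3, y] = 0 ∧
      Θ ![v0, v2, v3, y] = 0 ∧ Θ ![v1, v2, v3, y] = 0) :
    LinearIndependent ℂ ![v0, v1, v2, v3, w, w'] := by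
  rw [Fintype.linearIndependent_iff]
  intro a ha
  simp only [Fin.sum_univ_six] at ha
  simp at ha
  obtain ⟨p1, p2, p3, p4⟩ := h w (Or.inl rfl)
  obtain ⟨q1, q2, q3, q4⟩ := h w' (Or.inr rfl)
  have z : ∀ x y z : U, Θ ![x, y, z, 0] = 0 := fun x y z => Θ.map_coord_zero 3 rfl
  have e1 := z v1 v2 v3
  have e2 := z v0 v2 v3
  have e3 := z v0 v1 v3
  have e4 := z v0 v1 v2
  rw [← ha] at e1 e2 e3 e4
  simp only [T_add4, T_smul4, T_e14, T_e24, T_e34, p1, p2, p3, p4, q1, q2, q3, q4, mul_zero,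
    add_zero, zero_add, T_34 Θ v0 v1 v2 v3] at e1 e2 e3 e4
  rw [T_34 Θ v1 v2 v0 v3, T_23 Θ v1 v0 v2 v3, T_12 Θ v0 v1] at e1
  rw [T_34 Θ v0 v2 v1 v3, T_23 Θ v0 v1 v2 v3] at e2
  have a0 : a 0 = 0 := by simpa [hm] using e1
  have a1 : a 1 = 0 := by simpa [hm] using e2
  have a2 : a 2 = 0 := by simpa [hm] using e3
  have a3 : a 3 = 0 := by simpa [hm] using e4
  simp only [a0, a1, a2, a3, zero_smul, zero_add] at ha
  have := (LinearIndependent.pair_iff.mp hw) _ _ ha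
  intro i; fin_cases i
  exacts [a0, a1, a2, a3, this.1, this.2]

theorem normal_form (hU : finrank ℂ U = 6) (Θ : U [⋀^Fin 4]→ₗ[ℂ] ℂ) (hΘ : Θ ≠ 0) :
    ∃ (f : Basis (Fin 6) ℂ (Module.Dual ℂ U)) (m p q : ℂ), m ≠ 0 ∧ (p = 0 → q = 0) ∧
      Θ = m • wedgeCov 4 ![f 0, f 1, f 2, f 3] + p • wedgeCov 4 ![f 0, f 1, f 4, f 5]
        + q • wedgeCov 4 ![f 2, f 3, f 4, f 5] := by
  obtain ⟨v, hv⟩ : ∃ v, Θ v ≠ 0 := by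
    by_contra! h; exact hΘ (AlternatingMap.ext h)
  let φ : U →ₗ[ℂ] (Fin 4 → ℂ) := LinearMap.pi fun i => (Θ.toMultilinearMap.toLinearMap v i)
  have hφ : ∀ x, φ x = 0 → ∀ i, Θ (Function.update v i x) = 0 := fun x hx i => congrFun hx i
  have hdim : 2 ≤ finrank ℂ (LinearMap.ker φ) := by
    have h1 := LinearMap.finrank_range_add_finrank_ker φ
    have h2 := Submodule.finrank_le (LinearMap.range φ)
    simp at h2
    omega
  obtain ⟨w, hw⟩ := exists_linearIndependent_of_le_finrank hdim
  obtain ⟨w4, h4⟩ : ∃ x : U, x = w 0 := ⟨_, rfl⟩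
  obtain ⟨w5, h5⟩ : ∃ x : U, x = w 1 := ⟨_, rfl⟩
  have hind : LinearIndependent ℂ ![w4, w5] := by
    have := hw.map' (LinearMap.ker φ).subtype (Submodule.ker_subtype _)
    have e : ![w4, w5] = (LinearMap.ker φ).subtype ∘ w := by
      ext i; fin_cases i
      · exact h4
      · exact h5
    rw [e]; exact this
  have hk4 : ∀ i, Θ (Function.update v i w4) = 0 := hφ _ (by rw [h4]; exact (w 0).2)
  have hk5 : ∀ i, Θ (Function.update v i w5) = 0 := hφ _ (by rw [h5]; exact (w 1).2)
  -- general conditions, stable under permutation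
  have gen : ∀ σ : Equiv.Perm (Fin 4), Θ ![v (σ 0), v (σ 1), v (σ 2), v (σ 3)] ≠ 0 ∧
      ∀ y, (y = w4 ∨ y = w5) →
       Θ ![v (σ 0), v (σ 1), v (σ 2), y] = 0 ∧ Θ ![v (σ 0), v (σ 1), v (σ 3), y] = 0 ∧
      Θ ![v (σ 0), v (σ 2), v (σ 3), y] = 0 ∧ Θ ![v (σ 1), v (σ 2), v (σ 3), y] = 0 := by
    intro σ
    have c1 : Θ (v ∘ σ) ≠ 0 := by
      rw [AlternatingMap.map_perm]
      intro h
      exact hv ((smul_eq_zero_iff_eq _).mp h)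
    have c2 : ∀ y, (y = w4 ∨ y = w5) → ∀ i, Θ (Function.update (v ∘ σ) i y) = 0 := by
      intro y hy i
      have : Function.update (v ∘ σ) i y = Function.update v (σ i) y ∘ σ := by
        rw [Function.update_comp_eq_of_injective _ σ.injective]
      rw [this, AlternatingMap.map_perm]
      rcases hy with rfl | rfl
      · rw [hk4, smul_zero]
      · rw [hk5, smul_zero]
    refine ⟨by rw [eta4 (v ∘ σ) |>.symm] at c1; exact c1, fun y hy => ?_⟩
    have d0 := c2 y hy 0
    have d1 := c2 y hy 1
    have d2 := c2 y hy 2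
    have d3 := c2 y hy 3
    rw [← eta4 (Function.update _ _ _)] at d0 d1 d2 d3
    simp at d0 d1 d2 d3
    refine ⟨d3, ?_, ?_, ?_⟩
    · rw [T_34, d2, neg_zero]
    · rw [T_34, T_23, d1]; simp
    · rw [T_34, T_23, T_12, d0]; simp
  by_cases hz : ∀ i j, Θ ![v i, v j, w4, w5] = 0
  · obtain ⟨hm, hh⟩ := gen 1
    simp only [Equiv.Perm.one_apply] at hm hh
    obtain ⟨f, hf⟩ := final_family hU Θ _ (indep6 Θ _ _ _ _ _ _ hm hind hh) _ 0 0 rfl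
      (hz 0 1) (hz 2 3) (by
        intro a b c d hab hbc hc hd
        have ht : (a = 0 ∧ b = 1 ∧ c = 2) ∨ (a = 0 ∧ b = 1 ∧ c = 3) ∨ (a = 0 ∧ b = 2 ∧ c = 3) ∨
          (a = 1 ∧ b = 2 ∧ c = 3) := by omega
        have ht2 : d = 4 ∨ d = 5 := by omega
        rcases ht2 with rfl | rfl
        · obtain ⟨p1, p2, p3, p4⟩ := hh _ (Or.inl rfl)
          rcases ht with ⟨rfl, rfl, rfl⟩ | ⟨rfl, rfl, rfl⟩ | ⟨rfl, rfl, rfl⟩ | ⟨rfl, rfl, rfl⟩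
          exacts [p1, p2, p3, p4]
        · obtain ⟨p1, p2, p3, p4⟩ := hh _ (Or.inr rfl)
          rcases ht with ⟨rfl, rfl, rfl⟩ | ⟨rfl, rfl, rfl⟩ | ⟨rfl, rfl, rfl⟩ | ⟨rfl, rfl, rfl⟩
          exacts [p1, p2, p3, p4])
      (hz 0 2) (hz 0 3) (hz 1 2) (hz 1 3)
    exact ⟨f, _, 0, 0, hm, fun _ => rfl, hf⟩
  · push Not at hz
    obtain ⟨i, j, hij⟩ := hz
    have hne : i ≠ j := by
      rintro rfl; exact hij (T_e12 _ _ _ _)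
    obtain ⟨σ, rfl, rfl⟩ : ∃ σ : Equiv.Perm (Fin 4), σ 0 = i ∧ σ 1 = j := by
      have hd : ∀ i j : Fin 4, i ≠ j → ∃ σ : Equiv.Perm (Fin 4), σ 0 = i ∧ σ 1 = j := by decide
      exact hd i j hne
    obtain ⟨hm, hh⟩ := gen σ
    generalize v (σ 0) = v0 at *
    generalize v (σ 1) = v1 at *
    generalize v (σ 2) = v2 at *
    generalize v (σ 3) = v3 at *
    set p := Θ ![v0, v1, w4, w5] with hp
    -- adjust
    obtain ⟨x2, hx2⟩ : ∃ x, x = v2 + ((- (Θ ![v2, v1, w4, w5] / p)) • v0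
      + (- (Θ ![v0, v2, w4, w5] / p)) • v1) := ⟨_, rfl⟩
    obtain ⟨x3, hx3⟩ : ∃ x, x = v3 + ((- (Θ ![v3, v1, w4, w5] / p)) • v0
      + (- (Θ ![v0, v3, w4, w5] / p)) • v1) := ⟨_, rfl⟩
    have hm' : Θ ![v0, v1, x2, x3] ≠ 0 := by
      rw [hx2, hx3]
      simpa only [T_add3, T_add4, T_smul3, T_smul4, T_e13, T_e14, T_e23, T_e24, mul_zero,
        add_zero] using hm
    have hh' : ∀ y, (y = w4 ∨ y = w5) → Θ ![v0, v1, x2, y] = 0 ∧ Θ ![v0, v1, x3, y] = 0 ∧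
      Θ ![v0, x2, x3, y] = 0 ∧ Θ ![v1, x2, x3, y] = 0 := by
      intro y hy
      obtain ⟨p1, p2, p3, p4⟩ := hh y hy
      have r1 : Θ ![v0, v2, v1, y] = 0 := by rw [T_23, p1, neg_zero]
      have r2 : Θ ![v1, v0, v3, y] = 0 := by rw [T_12, p2, neg_zero]
      have r3 : Θ ![v1, v2, v0, y] = 0 := by rw [T_23, T_12, p1]; simp
      rw [hx2, hx3]
      simp only [T_add2, T_add3, T_smul2, T_smul3, T_e12, T_e13, T_e23, mul_zero,
        add_zero, p1, p2, p3, p4, r1, r2, r3, and_self]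
    have s2 : Θ ![v0, x2, w4, w5] = 0 := by
      rw [hx2]
      simp only [T_add2, T_smul2, T_e12, ← hp]
      field_simp; ring
    have s3 : Θ ![v0, x3, w4, w5] = 0 := by
      rw [hx3]
      simp only [T_add2, T_smul2, T_e12, ← hp]
      field_simp; ring
    have t2 : Θ ![v1, x2, w4, w5] = 0 := by
      rw [T_12, neg_eq_zero, hx2]
      simp only [T_add1, T_smul1, T_e12, ← hp]
      field_simp; ring
    have t3 : Θ ![v1, x3, w4, w5] = 0 := by
      rw [T_12, neg_eq_zero, hx3]
      simp only [T_add1, T_smul1, T_e12, ← hp]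
      field_simp; ring
    obtain ⟨f, hf⟩ := final_family hU Θ _ (indep6 Θ _ _ _ _ _ _ hm' hind hh') _ p _ rfl
      rfl rfl (by
        intro a b c d hab hbc hc hd
        have ht : (a = 0 ∧ b = 1 ∧ c = 2) ∨ (a = 0 ∧ b = 1 ∧ c = 3) ∨ (a = 0 ∧ b = 2 ∧ c = 3) ∨
          (a = 1 ∧ b = 2 ∧ c = 3) := by omega
        have ht2 : d = 4 ∨ d = 5 := by omega
        rcases ht2 with rfl | rfl
        · obtain ⟨p1, p2, p3, p4⟩ := hh' _ (Or.inl rfl)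
          rcases ht with ⟨rfl, rfl, rfl⟩ | ⟨rfl, rfl, rfl⟩ | ⟨rfl, rfl, rfl⟩ | ⟨rfl, rfl, rfl⟩
          exacts [p1, p2, p3, p4]
        · obtain ⟨p1, p2, p3, p4⟩ := hh' _ (Or.inr rfl)
          rcases ht with ⟨rfl, rfl, rfl⟩ | ⟨rfl, rfl, rfl⟩ | ⟨rfl, rfl, rfl⟩ | ⟨rfl, rfl, rfl⟩
          exacts [p1, p2, p3, p4])
      s2 s3 t2 t3
    exact ⟨f, _, p, _, hm', fun h => absurd h hij, hf⟩

end normalform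

section mainproof

theorem d4_scale (F0 F1 F2 F3 F4 F5 : Fin 4 → ℂ) (s t r : ℂ) :
    d4 (fun j => s * F0 j) F1 (fun j => t * F2 j) F3
      + d4 (fun j => s * F0 j) F1 (fun j => r * F4 j) F5
      + d4 (fun j => t * F2 j) F3 (fun j => r * F4 j) F5
    = s * t * d4 F0 F1 F2 F3 + s * r * d4 F0 F1 F4 F5 + t * r * d4 F2 F3 F4 F5 := by
  unfold d4; ring

theorem d4_zero4 (p q r : Fin 4 → ℂ) : d4 p q r (fun _ => 0) = 0 := by
  unfold d4; ring

set_option maxHeartbeats 4000000 in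
theorem d4_null (F0 F1 F2 F3 F4 F5 b0 b1 b2 b3 b4 : Fin 4 → ℂ) (m p i : ℂ) (hi : i * i = -1)
    (h0 : ∀ j, b0 j = m * F2 j) (h1 : ∀ j, b1 j = i * m * F2 j) (h2 : ∀ j, b2 j = p * F4 j)
    (h3 : ∀ j, b3 j = F0 j - i * p * F4 j) (h4 : ∀ j, b4 j = F1 j + i * F5 j) :
    d4 b0 b1 b2 b3 + d4 b0 b1 b4 F5 + d4 b2 b3 b4 F5 - d4 b1 b3 F5 F3 + d4 b1 b2 b4 F3
      + d4 b0 b3 b4 F3 + d4 b0 b2 F5 F3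
    = m * d4 F0 F1 F2 F3 + p * d4 F0 F1 F4 F5 := by
  have hi2 : d4 (fun j => m * F2 j) (fun j => p * F4 j) F5 F3 * (i * i + 1) = 0 := by
    rw [hi]; ring
  unfold d4 at hi2 ⊢
  simp only [h0, h1, h2, h3, h4]
  linear_combination hi2

variable {g : Type*}

theorem expand3 [AddCommGroup g] [Module ℂ g] (S : Submodule ℂ g) (e : g)
    (Φ : g [⋀^Fin 4]→ₗ[ℂ] ℂ) (k : g)
    (hΦ : ∀ b ∈ S, ∀ c ∈ S, ∀ d ∈ S, Φ ![k, b, c, d] = 0)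
    (t1 t2 t3 : ℂ) (y1 y2 y3 : g) (h1 : y1 ∈ S) (h2 : y2 ∈ S) (h3 : y3 ∈ S) :
    Φ ![k, t1 • e + y1, t2 • e + y2, t3 • e + y3] =
      t1 * Φ ![k, e, y2, y3] - t2 * Φ ![k, e, y1, y3] + t3 * Φ ![k, e, y1, y2] := by
  simp only [T_add2, T_add3, T_add4, T_smul2, T_smul3, T_smul4, T_e23, T_e24, T_e34,
      hΦ _ h1 _ h2 _ h3]
  rw [T_23 Φ k e y1, T_34 Φ k y1 e y2, T_23 Φ k e y1 y2]
  ring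

theorem closed_congr [LieRing g] [LieAlgebra ℂ g]
    (u : LieIdeal ℂ g) (habel : ∀ x ∈ u, ∀ y ∈ u, ⁅x, y⁆ = (0 : g))
    (e : g) (hdec : ∀ x : g, ∃ t : ℂ, ∃ y ∈ u, x = t • e + y)
    (Φ Ψ : g [⋀^Fin 4]→ₗ[ℂ] ℂ)
    (h : ∀ a ∈ u, ∀ b ∈ u, ∀ c ∈ u, ∀ d ∈ u, Φ ![a, b, c, d] = Ψ ![a, b, c, d])
    (hc : ceDiff 3 ⇑Φ = 0) : ceDiff 3 ⇑Ψ = 0 := by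
  have h1 := ceDiff_zero_of_vanish u habel e hdec (Φ - Ψ) (by
    intro a ha b hb c hc d hd
    rw [AlternatingMap.sub_apply, h a ha b hb c hc d hd, sub_self])
  ext x
  have h2 := congrFun h1 x
  have h3 := congrFun hc x
  rw [ceDiff_eq, Pi.zero_apply] at h2 h3 ⊢
  simp only [AlternatingMap.sub_apply] at h2
  linear_combination h3 - h2

theorem splitting [AddCommGroup g] [Module ℂ g] [FiniteDimensional ℂ g]
    (hg : finrank ℂ g = 7) (S : Submodule ℂ g) (hS : finrank ℂ S = 6) (e : g) (he : e ∉ S) :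
    ∃ (n : Module.Dual ℂ g) (π : g →ₗ[ℂ] S), n e = 1 ∧ (∀ x ∈ S, n x = 0) ∧ π e = 0 ∧
      (∀ x : S, π x = x) ∧ ∀ x, x = n x • e + (π x : g) := by
  obtain ⟨f, hfe, hfS⟩ := Submodule.exists_le_ker_of_notMem he
  let n : Module.Dual ℂ g := (f e)⁻¹ • f
  have hne : n e = 1 := by simp [n, hfe]
  have hnS : ∀ x ∈ S, n x = 0 := fun x hx => by
    have : f x = 0 := hfS hx
    simp [n, this]
  have hle : S ≤ LinearMap.ker n := hnS
  have hker : S = LinearMap.ker n := by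
    apply Submodule.eq_of_le_of_finrank_eq hle
    have h1 := LinearMap.finrank_range_add_finrank_ker n
    have h2 : LinearMap.range n = ⊤ := by
      rw [LinearMap.range_eq_top]
      intro c; exact ⟨c • e, by simp [hne]⟩
    rw [h2, finrank_top, Module.finrank_self] at h1
    omega
  have hmem : ∀ x, (LinearMap.id - n.smulRight e : g →ₗ[ℂ] g) x ∈ S := by
    intro x; rw [hker]; simp [hne]
  refine ⟨n, LinearMap.codRestrict S _ hmem, hne, hnS, ?_, ?_, ?_⟩
  · ext; simp [hne]
  · intro x; ext; simp [hnS x x.2]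
  · intro x; simp

theorem not_dec [AddCommGroup g] [Module ℂ g] [FiniteDimensional ℂ g]
    (S : Submodule ℂ g) (hS : finrank ℂ S = 6) (e : g) (n : Module.Dual ℂ g) (π : g →ₗ[ℂ] S)
    (hne : n e = 1) (hdec : ∀ x, x = n x • e + (π x : g))
    (b : Basis (Fin 7) ℂ (Module.Dual ℂ g)) (φ : Fin 4 → Module.Dual ℂ g)
    (h : ∀ k ∈ S, ∀ x ∈ S, ∀ y ∈ S, ∀ z ∈ S, stdG2 b ![k, x, y, z] = wedgeCov 4 φ ![k, x, y, z]) :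
    False := by
  have hk : ∃ k : S, k ≠ 0 ∧ ∀ i, φ i k = 0 := by
    by_contra! hcon
    let L : S →ₗ[ℂ] (Fin 4 → ℂ) := (LinearMap.pi φ).comp S.subtype
    have hinj : Function.Injective L := by
      rw [← LinearMap.ker_eq_bot, LinearMap.ker_eq_bot']
      intro k hk
      by_contra hk0
      obtain ⟨i, hi⟩ := hcon k hk0
      exact hi (congrFun hk i)
    have := LinearMap.finrank_le_finrank_of_injective hinj
    simp [hS] at this
  obtain ⟨k, hk0, hk⟩ := hk
  have hz : ∀ x ∈ S, ∀ y ∈ S, ∀ z ∈ S, stdG2 b ![(k : g), x, y, z] = 0 := by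
    intro x hx y hy z hz
    rw [h k k.2 x hx y hy z hz, wedge_apply]
    exact Matrix.det_eq_zero_of_row_eq_zero 0 (fun j => hk j)
  refine nondeg b n k ?_ ?_ ?_
  · rintro rfl; simp at hne
  · simpa using hk0
  · intro x y z w
    have ex := fun a b' c => expand3 S e (stdG2 b) (k : g) hz (n a) (n b') (n c) (π a) (π b') (π c)
      (π a).2 (π b').2 (π c).2
    simp only [← hdec] at ex
    rw [ex y z w, ex x z w, ex x y w, ex x y z]
    ring

end mainproof

section backward
variable {g : Type*} [AddCommGroup g] [Module ℂ g] [FiniteDimensional ℂ g]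

theorem li7 (e : g) (n : Module.Dual ℂ g) (S : Submodule ℂ g) (π : g →ₗ[ℂ] S)
    (hne : n e = 1) (hnS : ∀ x ∈ S, n x = 0) (hπe : π e = 0) (hπ : ∀ x : S, π x = x)
    (f : Basis (Fin 6) ℂ (Module.Dual ℂ S)) :
    ∀ a : Fin 7 → ℂ, a 0 • (f 0).comp π + a 1 • (f 1).comp π + a 2 • (f 2).comp π
      + a 3 • (f 3).comp π + a 4 • (f 4).comp π + a 5 • (f 5).comp π + a 6 • n = 0 →
      ∀ i, a i = 0 := by
  intro a ha
  obtain ⟨v, hv⟩ := exists_dual f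
  have h6 := LinearMap.congr_fun ha e
  have h0 := LinearMap.congr_fun ha (v 0)
  have h1 := LinearMap.congr_fun ha (v 1)
  have h2 := LinearMap.congr_fun ha (v 2)
  have h3 := LinearMap.congr_fun ha (v 3)
  have h4 := LinearMap.congr_fun ha (v 4)
  have h5 := LinearMap.congr_fun ha (v 5)
  simp [hne, hπe, hπ, hv, hnS _ (v _).2] at h0 h1 h2 h3 h4 h5 h6
  intro i; fin_cases i
  exacts [h0, h1, h2, h3, h4, h5, h6]

theorem mkBasis (hg : finrank ℂ g = 7) (c : Fin 7 → Module.Dual ℂ g)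
    (hc : LinearIndependent ℂ c) :
    ∃ b : Basis (Fin 7) ℂ (Module.Dual ℂ g), ∀ i, b i = c i :=
  ⟨basisOfLinearIndependentOfCardEqFinrank hc (by rw [Subspace.dual_finrank_eq, hg]; rfl),
    fun i => by simp⟩

theorem build (hg : finrank ℂ g = 7) (e : g) (n : Module.Dual ℂ g) (S : Submodule ℂ g)
    (π : g →ₗ[ℂ] S)
    (hne : n e = 1) (hnS : ∀ x ∈ S, n x = 0) (hπe : π e = 0) (hπ : ∀ x : S, π x = x)
    (f : Basis (Fin 6) ℂ (Module.Dual ℂ S)) (m p q : ℂ) (hm : m ≠ 0) (hp : p ≠ 0) :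
    ∃ b : Basis (Fin 7) ℂ (Module.Dual ℂ g), ∀ x : Fin 4 → g, (∀ i, x i ∈ S) →
      stdG2 b x = m * wedgeCov 4 ![f 0, f 1, f 2, f 3] (fun i => π (x i))
        + p * wedgeCov 4 ![f 0, f 1, f 4, f 5] (fun i => π (x i))
        + q * wedgeCov 4 ![f 2, f 3, f 4, f 5] (fun i => π (x i)) := by
  have li := li7 e n S π hne hnS hπe hπ f
  by_cases hq : q = 0
  · subst hq
    obtain ⟨b, hb⟩ := mkBasis hg ![m • (f 2).comp π, (Complex.I * m) • (f 2).comp π + n,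
      p • (f 4).comp π, (f 0).comp π - (Complex.I * p) • (f 4).comp π,
      (f 1).comp π + Complex.I • (f 5).comp π, (f 5).comp π, (f 3).comp π] (by
        rw [Fintype.linearIndependent_iff]
        intro a ha
        simp only [Fin.sum_univ_seven] at ha
        have h := li ![a 3, a 4, m * a 0 + Complex.I * m * a 1, a 6,
          p * a 2 - Complex.I * p * a 3, Complex.I * a 4 + a 5, a 1] (by
            rw [← ha]
            simp
            module)
        have h0 := h 0
        have h1 := h 1
        have h2 := h 2
        have h3 := h 3
        have h4 := h 4
        have h5 := h 5
        have h6 := h 6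
        simp at h0 h1 h2 h3 h4 h5 h6
        simp [h0, h1, h6, hm, hp] at h2 h4 h5
        intro i; fin_cases i
        exacts [h2, h6, h4, h0, h1, h5, h3])
    refine ⟨b, fun x hx => ?_⟩
    have hn0 : ∀ t, n (x t) = 0 := fun t => hnS _ (hx t)
    simp only [std_d4, bw_d4, wedge_d4]
    have := d4_null (fun t => f 0 (π (x t))) (fun t => f 1 (π (x t))) (fun t => f 2 (π (x t)))
      (fun t => f 3 (π (x t))) (fun t => f 4 (π (x t))) (fun t => f 5 (π (x t)))
      (fun t => b 0 (x t)) (fun t => b 1 (x t)) (fun t => b 2 (x t)) (fun t => b 3 (x t))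
      (fun t => b 4 (x t)) m p Complex.I Complex.I_mul_I
      (by intro t; simp [hb]) (by intro t; simp [hb, hn0]) (by intro t; simp [hb])
      (by intro t; simp [hb]) (by intro t; simp [hb])
    have e5 : (fun t => b 5 (x t)) = (fun t => f 5 (π (x t))) := by ext t; simp [hb]
    have e6 : (fun t => b 6 (x t)) = (fun t => f 3 (π (x t))) := by ext t; simp [hb]
    rw [e5, e6, this]
    simp
  · obtain ⟨s, hs⟩ := IsAlgClosed.exists_pow_nat_eq (m * p / q) (n := 2) (by norm_num)
    have hs0 : s ≠ 0 := by
      rintro rfl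
      have : m * p / q ≠ 0 := by positivity
      exact this (by rw [← hs]; norm_num)
    have h1 : s * (m / s) = m := by field_simp
    have h2 : s * (p / s) = p := by field_simp
    have h3 : (m / s) * (p / s) = q := by
      have : (m / s) * (p / s) = m * p / s ^ 2 := by field_simp
      rw [this, hs]; field_simp
    have ht0 : m / s ≠ 0 := div_ne_zero hm hs0
    have hr0 : p / s ≠ 0 := div_ne_zero hp hs0
    generalize m / s = t at *
    generalize p / s = r at *
    subst h1 h2 h3
    obtain ⟨b, hb⟩ := mkBasis hg ![s • (f 0).comp π, (f 1).comp π, t • (f 2).comp π,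
      (f 3).comp π, r • (f 4).comp π, (f 5).comp π, n] (by
        rw [Fintype.linearIndependent_iff]
        intro a ha
        simp only [Fin.sum_univ_seven] at ha
        have h := li ![s * a 0, a 1, t * a 2, a 3, r * a 4, a 5, a 6] (by
            rw [← ha]
            simp
            module)
        have h0 := h 0
        have h1 := h 1
        have h2 := h 2
        have h3 := h 3
        have h4 := h 4
        have h5 := h 5
        have h6 := h 6
        simp [hs0, ht0, hr0] at h0 h1 h2 h3 h4 h5 h6
        intro i; fin_cases i
        exacts [h0, h1, h2, h3, h4, h5, h6])
    refine ⟨b, fun x hx => ?_⟩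
    have hn0 : ∀ t, n (x t) = 0 := fun t => hnS _ (hx t)
    simp only [std_d4, bw_d4, wedge_d4]
    have := d4_scale (fun t => f 0 (π (x t))) (fun t => f 1 (π (x t))) (fun t => f 2 (π (x t)))
      (fun t => f 3 (π (x t))) (fun t => f 4 (π (x t))) (fun t => f 5 (π (x t))) s t r
    have e6 : (fun t => b 6 (x t)) = (fun _ => 0) := by ext t; simp [hb, hn0]
    rw [e6]
    simp only [d4_zero4, sub_zero, add_zero]
    simp [hb]
    exact this

theorem vanish_e (e : g) (Ω : g [⋀^Fin 4]→ₗ[ℂ] ℂ)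
    (h : mem4Pow (LinearMap.ker (Module.Dual.eval ℂ g e)) Ω) :
    ∀ (x : Fin 4 → g) (i : Fin 4), x i = e → Ω x = 0 := by
  intro x i hx
  unfold mem4Pow at h
  induction h using Submodule.span_induction with
  | mem Y hY =>
    obtain ⟨φ, hφ, rfl⟩ := hY
    rw [wedge_apply]
    refine Matrix.det_eq_zero_of_row_eq_zero i (fun j => ?_)
    have := hφ j
    rw [LinearMap.mem_ker] at this
    change φ j (x i) = 0
    rw [hx]; exact this
  | zero => rfl
  | add a b _ _ ha hb => rw [AlternatingMap.add_apply, ha, hb, add_zero]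
  | smul c a _ ha => rw [AlternatingMap.smul_apply, ha, smul_zero]

end backward

/-- Let `g` be a seven-dimensional complex Lie algebra with a
six-dimensional (complex) abelian ideal `u` and `e₇ ∈ g ∖ u`.  Then `g` admits a
cocalibrated `(G₂)_ℂ`-structure (a closed four-form of the standard type `stdG2`) iff
there is a closed four-form `Ω ∈ Λ⁴Ann(span e₇)` of length `≥ 2`. -/
theorem stmt15 {g : Type*} [LieRing g] [LieAlgebra ℂ g] [FiniteDimensional ℂ g]
    (hg : finrank ℂ g = 7)
    (u : LieIdeal ℂ g) (habel : ∀ x ∈ u, ∀ y ∈ u, ⁅x, y⁆ = (0 : g))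
    (hu : finrank ℂ ↥u = 6) (e₇ : g) (he : e₇ ∉ u) :
    (∃ Ψ : g [⋀^Fin 4]→ₗ[ℂ] ℂ, ceDiff 3 ⇑Ψ = 0 ∧
        ∃ b : Basis (Fin 7) ℂ (Module.Dual ℂ g), Ψ = stdG2 b) ↔
      (∃ Ω : g [⋀^Fin 4]→ₗ[ℂ] ℂ, ceDiff 3 ⇑Ω = 0 ∧
        mem4Pow (LinearMap.ker (Module.Dual.eval ℂ g e₇)) Ω ∧ ¬ AltLenLE 4 1 Ω) := by
  have hg' := hg
  obtain ⟨n, π, hne, hnS, hπe, hπ, hdec⟩ := splitting hg u.toSubmodule hu e₇ he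
  have hdec' : ∀ x : g, ∃ t : ℂ, ∃ y ∈ u, x = t • e₇ + y :=
    fun x => ⟨n x, π x, (π x).2, hdec x⟩
  have hπ' : ∀ x ∈ u, ((π x : u.toSubmodule) : g) = x := fun x hx => by
    have := hπ ⟨x, hx⟩
    exact congrArg Subtype.val this
  constructor
  · rintro ⟨Ψ, hcl, b, rfl⟩
    let P : g →ₗ[ℂ] g := u.toSubmodule.subtype.comp π
    have hP : ∀ x ∈ u, P x = x := hπ'
    have hag : ∀ a ∈ u, ∀ b' ∈ u, ∀ c ∈ u, ∀ d ∈ u,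
        stdG2 b ![a, b', c, d] = (stdG2 b).compLinearMap P ![a, b', c, d] := by
      intro a ha b' hb c hc d hd
      rw [AlternatingMap.compLinearMap_apply]
      congr 1
      ext i
      fin_cases i
      exacts [(hP a ha).symm, (hP b' hb).symm, (hP c hc).symm, (hP d hd).symm]
    refine ⟨(stdG2 b).compLinearMap P, closed_congr u habel e₇ hdec' _ _ hag hcl, ?_, ?_⟩
    · have hw : ∀ i j k l, (bw b i j k l).compLinearMap P ∈ Submodule.span ℂ
          {Y : g [⋀^Fin 4]→ₗ[ℂ] ℂ | ∃ φ : Fin 4 → Module.Dual ℂ g,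
            (∀ i, φ i ∈ LinearMap.ker (Module.Dual.eval ℂ g e₇)) ∧ Y = wedgeCov 4 φ} := by
        intro i j k l
        refine Submodule.subset_span ⟨_, fun t => ?_, wedge_comp P _⟩
        rw [LinearMap.mem_ker]
        simp [P, hπe]
      have hs : (stdG2 b).compLinearMap P = (bw b 0 1 2 3).compLinearMap P
        + (bw b 0 1 4 5).compLinearMap P + (bw b 2 3 4 5).compLinearMap P
        - (bw b 1 3 5 6).compLinearMap P + (bw b 1 2 4 6).compLinearMap P
        + (bw b 0 3 4 6).compLinearMap P + (bw b 0 2 5 6).compLinearMap P := rfl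
      unfold mem4Pow
      rw [hs]
      exact add_mem (add_mem (add_mem (sub_mem (add_mem (add_mem (hw _ _ _ _) (hw _ _ _ _))
        (hw _ _ _ _)) (hw _ _ _ _)) (hw _ _ _ _)) (hw _ _ _ _)) (hw _ _ _ _)
    · rintro ⟨Y, hY, h⟩
      obtain ⟨φ, hφ⟩ := hY 0
      rw [Fin.sum_univ_one, hφ] at h
      refine not_dec u.toSubmodule hu e₇ n π hne hdec b φ ?_
      intro k hk x hx y hy z hz
      rw [← h]
      exact hag k hk x hx y hy z hz
  · rintro ⟨Ω, hcl, hmem, hlen⟩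
    have hv := vanish_e e₇ Ω hmem
    let Θ : u.toSubmodule [⋀^Fin 4]→ₗ[ℂ] ℂ := Ω.compLinearMap u.toSubmodule.subtype
    have hΩ : Ω = Θ.compLinearMap π := by
      ext x
      have v1 : ∀ a b c, Ω ![e₇, a, b, c] = 0 := fun a b c => hv _ 0 rfl
      have v2 : ∀ a b c, Ω ![a, e₇, b, c] = 0 := fun a b c => hv _ 1 rfl
      have v3 : ∀ a b c, Ω ![a, b, e₇, c] = 0 := fun a b c => hv _ 2 rfl
      have v4 : ∀ a b c, Ω ![a, b, c, e₇] = 0 := fun a b c => hv _ 3 rfl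
      have h1 : Θ.compLinearMap π x = Ω ![(π (x 0) : g), π (x 1), π (x 2), π (x 3)] := by
        change Ω _ = _
        congr 1; ext i; fin_cases i <;> rfl
      rw [h1, ← eta4 x]
      conv_lhs => rw [hdec (x 0), hdec (x 1), hdec (x 2), hdec (x 3)]
      simp only [T_add1, T_add2, T_add3, T_add4, T_smul1, T_smul2, T_smul3, T_smul4, v1, v2, v3, v4,
        mul_zero, zero_add]
      simp
    have hdecomp : ∀ φ : Fin 4 → Module.Dual ℂ g, Ω ≠ wedgeCov 4 φ := by
      intro φ h
      exact hlen ⟨fun _ => Ω, fun _ => ⟨φ, h⟩, by simp⟩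
    have hΘ : Θ ≠ 0 := by
      intro h0
      apply hdecomp 0
      rw [hΩ, h0]
      ext x
      rw [wedge_d4]
      simp [d4]
    obtain ⟨f, m, p, q, hm, hpq, hf⟩ := normal_form hu Θ hΘ
    by_cases hp : p = 0
    · exfalso
      rw [hp, hpq hp, zero_smul, zero_smul, add_zero, add_zero] at hf
      apply hdecomp ![m • (f 0).comp π, (f 1).comp π, (f 2).comp π, (f 3).comp π]
      rw [hΩ, hf]
      ext x
      change m * wedgeCov 4 _ (fun i => π (x i)) = _
      rw [wedge_d4, wedge_d4]
      simp [d4]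
      ring
    · obtain ⟨b, hb⟩ := build hg e₇ n u.toSubmodule π hne hnS hπe hπ f m p q hm hp
      refine ⟨stdG2 b, closed_congr u habel e₇ hdec' Ω _ ?_ hcl, b, rfl⟩
      intro a ha b' hb' c hc d hd
      rw [hb _ (by intro i; fin_cases i; exacts [ha, hb', hc, hd]), hΩ, hf]
      rfl
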